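/- Let n ≥ 1 and r ≥ 1, let φ : ℂ^n → ℂ be a smooth (C^∞) function with compact support, let α_1,…,α_r ∈ ℕ^n be multi-indices, and let β ∈ ℕ^n be a multi-index such that for each coordinate k with β_k > 0 there exists ℓ with α_{ℓ,k} > 0. Then there exist δ > 0, C > 0, and a function g : ℂ^r → ℂ analytic on {λ = (λ_1,…,λ_r) ∈ ℂ^r : Re λ_ℓ > −δ for all ℓ} such that for every λ ∈ ℂ^r with Re λ_ℓ > C for all ℓ, the function z ↦ Π_{ℓ=1}^r Π_{k=1}^n ‖z_k‖^{2 λ_ℓ α_{ℓ,k}} · Π_{k=1}^n z_k^{−β_k} · φ(z) is integrable on ℂ^n and g(λ) equals its integral over ℂ^n with respect to dV. -/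

import Mathlib

open MeasureTheory

lemma expint_analytic {X : Type*} [MeasurableSpace X] (ν : Measure X) {E : Type*}
    [NormedAddCommGroup E] [NormedSpace ℂ E] (L : X → E →L[ℂ] ℂ)
    (hL : AEStronglyMeasurable L ν) (w : X → ℂ) (hw : AEStronglyMeasurable w ν) (x0 : E)
    (ε : ℝ) (hε : 0 < ε)
    (hint : Integrable (fun x => ‖w x‖ * Real.exp ((L x x0).re + ε * ‖L x‖)) ν) :
    AnalyticAt ℂ (fun y => ∫ x, Complex.exp (L x y) * w x ∂ν) x0 := by
  let q : (m : ℕ) → X → ContinuousMultilinearMap ℂ (fun _ : Fin m => E) ℂ := fun m x =>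
    (Complex.exp (L x x0) * w x * ((m.factorial : ℂ))⁻¹) •
      (ContinuousMultilinearMap.mkPiAlgebraFin ℂ m ℂ).compContinuousLinearMap (fun _ => L x)
  have hLx0 : ∀ y, AEStronglyMeasurable (fun x => L x y) ν := fun y =>
    (show Continuous (fun l : E →L[ℂ] ℂ => l y) by fun_prop).comp_aestronglyMeasurable hL
  have hq_meas : ∀ m, AEStronglyMeasurable (q m) ν := by
    intro m
    have hsc : AEStronglyMeasurable
        (fun x => Complex.exp (L x x0) * w x * ((m.factorial : ℂ))⁻¹) ν :=
      ((Complex.continuous_exp.comp_aestronglyMeasurable (hLx0 x0)).mul hw).mul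
        aestronglyMeasurable_const
    have hc : Continuous (fun l : E →L[ℂ] ℂ =>
        ContinuousMultilinearMap.compContinuousLinearMapLRight (E := fun _ : Fin m => E)
          (ContinuousMultilinearMap.mkPiAlgebraFin ℂ m ℂ) (fun _ => l)) :=
      (ContinuousMultilinearMap.cont _).comp (continuous_pi fun _ => continuous_id)
    exact hsc.smul (hc.comp_aestronglyMeasurable hL)
  have hq_norm : ∀ m x, ‖q m x‖ * ε ^ m ≤
      ‖w x‖ * Real.exp ((L x x0).re) * ((ε * ‖L x‖) ^ m / m.factorial) := by
    intro m x
    have h1 : ‖(ContinuousMultilinearMap.mkPiAlgebraFin ℂ m ℂ).compContinuousLinearMap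
        (fun _ => L x)‖ ≤ ‖L x‖ ^ m := by
      refine (ContinuousMultilinearMap.norm_compContinuousLinearMap_le _ _).trans ?_
      simp
    have h2 : ‖q m x‖ ≤ ‖Complex.exp (L x x0) * w x * ((m.factorial : ℂ))⁻¹‖ * ‖L x‖ ^ m := by
      simp only [q]
      rw [norm_smul]
      gcongr
    calc ‖q m x‖ * ε ^ m ≤
        (‖Complex.exp (L x x0) * w x * ((m.factorial : ℂ))⁻¹‖ * ‖L x‖ ^ m) * ε ^ m := by gcongr
      _ = _ := by
        simp only [norm_mul, Complex.norm_exp, norm_inv, Complex.norm_natCast]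
        rw [mul_pow]; ring
  have hterm : ∀ (t : ℝ) (m : ℕ), 0 ≤ t → t ^ m / m.factorial ≤ Real.exp t := fun t m ht =>
    Real.pow_div_factorial_le_exp t ht m
  have hbd : ∀ m x, ‖q m x‖ * ε ^ m ≤ ‖w x‖ * Real.exp ((L x x0).re + ε * ‖L x‖) := by
    intro m x
    refine (hq_norm m x).trans ?_
    rw [Real.exp_add, ← mul_assoc]
    gcongr
    exact hterm _ _ (by positivity)
  have hq_int : ∀ m, Integrable (q m) ν := by
    intro m
    refine Integrable.mono' (hint.mul_const ((ε ^ m)⁻¹)) (hq_meas m) (ae_of_all _ fun x => ?_)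
    rw [← div_eq_mul_inv, le_div_iff₀ (by positivity)]
    exact hbd m x
  refine ⟨fun m => ∫ x, q m x ∂ν, ENNReal.ofReal ε, ?_, by simpa using hε, ?_⟩
  · refine FormalMultilinearSeries.le_radius_of_bound (r := ε.toNNReal) _
      (∫ x, ‖w x‖ * Real.exp ((L x x0).re + ε * ‖L x‖) ∂ν) fun m => ?_
    rw [Real.coe_toNNReal _ hε.le]
    calc ‖∫ x, q m x ∂ν‖ * ε ^ m ≤ (∫ x, ‖q m x‖ ∂ν) * ε ^ m := by
          gcongr; exact norm_integral_le_integral_norm _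
      _ = ∫ x, ‖q m x‖ * ε ^ m ∂ν := (integral_mul_const _ _).symm
      _ ≤ _ := integral_mono ((hq_int m).norm.mul_const _) hint (hbd m)
  · intro y hy
    have hy' : ‖y‖ < ε := by
      simpa [Metric.mem_eball, edist_zero_right, ← ofReal_norm,
        ENNReal.ofReal_lt_ofReal_iff hε] using hy
    have happ : ∀ m x, q m x (fun _ => y) =
        Complex.exp (L x x0) * w x * ((L x y) ^ m / m.factorial) := by
      intro m x
      simp [q, div_eq_mul_inv]
      ring
    have := hasSum_integral_of_dominated_convergence (μ := ν)
      (F := fun m x => q m x (fun _ => y)) (f := fun x => Complex.exp (L x (x0 + y)) * w x)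
      (fun m x => ‖w x‖ * Real.exp ((L x x0).re) * ((ε * ‖L x‖) ^ m / m.factorial))
      (fun m => ?_) (fun m => ?_) ?_ ?_ ?_
    · convert this using 2 with m
      exact ContinuousMultilinearMap.integral_apply (hq_int m) _
    · exact ((ContinuousMultilinearMap.apply ℂ _ ℂ (fun _ : Fin m => y)).continuous.comp_aestronglyMeasurable
        (hq_meas m))
    · refine ae_of_all _ fun x => ?_
      rw [happ]
      simp only [norm_mul, Complex.norm_exp, norm_div, norm_pow, Complex.norm_natCast]
      rw [mul_comm (Real.exp _)]
      gcongr
      refine ((L x).le_opNorm y).trans ?_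
      rw [mul_comm]; gcongr
    · exact ae_of_all _ fun x => (Real.summable_pow_div_factorial _).mul_left _
    · convert hint using 2 with x
      rw [tsum_mul_left, Real.exp_add, mul_assoc]
      congr 2
      rw [Real.exp_eq_exp_ℝ, NormedSpace.exp_eq_tsum_div]
    · refine ae_of_all _ fun x => ?_
      simp only [happ]
      have h := (NormedSpace.expSeries_div_hasSum_exp (L x y)).mul_left (Complex.exp (L x x0) * w x)
      rw [← Complex.exp_eq_exp_ℂ] at h
      have he : Complex.exp (L x (x0 + y)) * w x =
          Complex.exp (L x x0) * w x * Complex.exp (L x y) := by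
        rw [map_add, Complex.exp_add]; ring
      rw [he]
      exact h
/-- one-variable factor -/
noncomputable def hfun (β j : ℕ) (μ z : ℂ) : ℂ :=
  ((‖z‖ ^ 2 : ℝ) : ℂ) ^ μ * z ^ (-(β : ℤ)) * (starRingEnd ℂ z) ^ j

lemma hfun_zero (β j : ℕ) (μ : ℂ) (hμ : μ ≠ 0) : hfun β j μ 0 = 0 := by
  simp [hfun, Complex.zero_cpow hμ]

lemma hfun_bound (β j : ℕ) (μ z : ℂ) (hμ : β + 2 < μ.re) (hz : ‖z‖ ≤ 1) :
    ‖hfun β j μ z‖ ≤ ‖z‖ ^ 2 := by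
  have hμ0 : μ ≠ 0 := by
    rintro rfl
    simp at hμ
    linarith [(Nat.cast_nonneg β : (0:ℝ) ≤ β)]
  by_cases h0 : z = 0
  · subst h0; rw [hfun_zero _ _ _ hμ0]; simp
  have hp : 0 < ‖z‖ := norm_pos_iff.mpr h0
  have h1 : (‖z‖ ^ 2) ^ μ.re ≤ (‖z‖ ^ 2) ^ (β + 2) := by
    rw [← Real.rpow_natCast (‖z‖ ^ 2) (β + 2)]
    exact Real.rpow_le_rpow_of_exponent_ge (by positivity) (pow_le_one₀ hp.le hz)
      (by push_cast; exact hμ.le)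
  unfold hfun
  rw [norm_mul, norm_mul, Complex.norm_cpow_eq_rpow_re_of_pos (by positivity), norm_zpow, norm_pow,
    RCLike.norm_conj, zpow_neg, zpow_natCast]
  calc (‖z‖ ^ 2) ^ μ.re * (‖z‖ ^ β)⁻¹ * ‖z‖ ^ j ≤ (‖z‖ ^ 2) ^ (β + 2) * (‖z‖ ^ β)⁻¹ * 1 := by
        gcongr
        exact pow_le_one₀ hp.le hz
    _ = ‖z‖ ^ 2 * (‖z‖ ^ (β + 2)) := by field_simp; ring
    _ ≤ ‖z‖ ^ 2 * 1 := by
        gcongr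
        exact pow_le_one₀ hp.le hz
    _ = _ := mul_one _

lemma hfun_fderiv_zero (β j : ℕ) (μ : ℂ) (hμ : β + 2 < μ.re) :
    HasFDerivAt (hfun β j μ) (0 : ℂ →L[ℝ] ℂ) 0 := by
  refine Asymptotics.IsBigO.hasFDerivAt (n := 2) ?_ (by norm_num)
  refine Asymptotics.IsBigO.of_bound 1 ?_
  filter_upwards [Metric.closedBall_mem_nhds (0 : ℂ) one_pos] with z hz
  have := hfun_bound β j μ z hμ (by simpa using hz)
  simpa using this

lemma hfun_continuous (β j : ℕ) (μ : ℂ) (hμ : β + 2 < μ.re ∨ (β = 0 ∧ μ = 0)) :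
    Continuous (hfun β j μ) := by
  rcases hμ with hμ | ⟨rfl, rfl⟩
  · rw [continuous_iff_continuousAt]
    intro z
    by_cases h0 : z = 0
    · subst h0; exact (hfun_fderiv_zero β j μ hμ).continuousAt
    · unfold hfun
      refine ContinuousAt.mul (ContinuousAt.mul ?_ ?_) ?_
      · refine ContinuousAt.cpow (by fun_prop) continuousAt_const ?_
        rw [Complex.ofReal_mem_slitPlane]
        have : 0 < ‖z‖ := norm_pos_iff.mpr h0
        positivity
      · exact continuousAt_zpow₀ _ _ (Or.inl h0)
      · exact (Complex.continuous_conj.pow j).continuousAt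
  · have : hfun 0 j 0 = fun z => (starRingEnd ℂ z) ^ j := by
      funext z; simp [hfun]
    rw [this]
    exact Complex.continuous_conj.pow j

lemma hfun_line (β j : ℕ) (μ z v : ℂ) (hμ : β + 3 < μ.re) :
    HasDerivAt (fun t : ℝ => hfun β (j + 1) μ (z + t * v))
      (v * ((μ - β) * hfun (β + 1) (j + 1) μ z) +
        (starRingEnd ℂ v) * ((μ + j + 1) * hfun β j μ z)) 0 := by
  have hμ0 : μ ≠ 0 := by
    rintro rfl
    simp at hμ
    linarith [(Nat.cast_nonneg β : (0:ℝ) ≤ β)]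
  by_cases h0 : z = 0
  · subst h0
    rw [hfun_zero _ _ _ hμ0, hfun_zero _ _ _ hμ0]
    have h := (hfun_fderiv_zero β (j + 1) μ (by linarith)).hasLineDerivAt v
    simpa [HasLineDerivAt] using h
  · have hγ : HasDerivAt (fun t : ℝ => z + t * v) v 0 := by
      simpa using ((Complex.ofRealCLM.hasDerivAt (x := (0:ℝ))).mul_const v).const_add z
    have hγc : HasDerivAt (fun t : ℝ => starRingEnd ℂ (z + t * v)) (starRingEnd ℂ v) 0 := by
      have h := ((Complex.ofRealCLM.hasDerivAt (x := (0:ℝ))).mul_const (starRingEnd ℂ v)).const_add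
        (starRingEnd ℂ z)
      simpa using h
    have hzc : starRingEnd ℂ z ≠ 0 := by simpa using h0
    have hNz : z * starRingEnd ℂ z = ((‖z‖ ^ 2 : ℝ) : ℂ) := by
      rw [Complex.mul_conj, Complex.normSq_eq_norm_sq]
    have hN := hγ.mul hγc
    have hsl : z * starRingEnd ℂ z ∈ Complex.slitPlane := by
      rw [hNz, Complex.ofReal_mem_slitPlane]
      have : 0 < ‖z‖ := norm_pos_iff.mpr h0
      positivity
    have h1 : HasDerivAt (fun t : ℝ => ((z + t * v) * starRingEnd ℂ (z + t * v)) ^ μ)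
        (μ * (z * starRingEnd ℂ z) ^ (μ - 1) *
          (v * starRingEnd ℂ z + z * starRingEnd ℂ v)) 0 := by
      have := (hasDerivAt_id (z * starRingEnd ℂ z)).cpow_const (c := μ) (by simpa using hsl)
      have h2 := HasDerivAt.comp (0 : ℝ) (h₂ := fun w : ℂ => w ^ μ)
        (h := fun t : ℝ => (z + t * v) * starRingEnd ℂ (z + t * v))
        (by simpa using this) hN
      simpa [Function.comp_def] using h2
    have h2 : HasDerivAt (fun t : ℝ => (z + t * v) ^ (-(β : ℤ)))
        (-(β : ℂ) * z ^ (-(β : ℤ) - 1) * v) 0 := by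
      have := hasDerivAt_zpow (-(β : ℤ)) z (Or.inl h0)
      have h2 := HasDerivAt.comp (0 : ℝ) (h₂ := fun w : ℂ => w ^ (-(β : ℤ)))
        (h := fun t : ℝ => (z + t * v)) (by simpa using this) hγ
      simpa [Function.comp_def] using h2
    have h3 := (h1.mul h2).mul (hγc.pow (j + 1))
    have hfe : (fun t : ℝ => hfun β (j + 1) μ (z + t * v)) = fun t : ℝ =>
      ((z + t * v) * starRingEnd ℂ (z + t * v)) ^ μ * (z + t * v) ^ (-(β : ℤ)) *
        (starRingEnd ℂ (z + t * v)) ^ (j + 1) := by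
      funext t
      rw [hfun, Complex.mul_conj, Complex.normSq_eq_norm_sq]
    rw [hfe]
    refine h3.congr_deriv ?_
    simp only [hfun, ← hNz]
    have hne : z * starRingEnd ℂ z ≠ 0 := mul_ne_zero h0 hzc
    simp only [Complex.ofReal_zero, zero_mul, add_zero, Pi.mul_apply, Pi.pow_apply]
    rw [Complex.cpow_sub _ _ hne, Complex.cpow_one, zpow_sub₀ h0, zpow_neg, zpow_neg,
      zpow_natCast, zpow_natCast, zpow_one]
    generalize (z * starRingEnd ℂ z) ^ μ = N
    generalize starRingEnd ℂ z = zc at *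
    push_cast
    field_simp
    ring

/-- multi-variable factor -/
noncomputable def Ffun {n : ℕ} (β γ : Fin n → ℕ) (μ z : Fin n → ℂ) : ℂ :=
  ∏ k, hfun (β k) (γ k) (μ k) (z k)

/-- twice the antiholomorphic partial derivative -/
noncomputable def dbar {n : ℕ} (k : Fin n) (φ : (Fin n → ℂ) → ℂ) (z : Fin n → ℂ) : ℂ :=
  fderiv ℝ φ z (Pi.single k 1) + Complex.I * fderiv ℝ φ z (Pi.single k Complex.I)

def Good {n : ℕ} (β : Fin n → ℕ) (μ : Fin n → ℂ) : Prop :=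
  ∀ k, (β k : ℝ) + 3 < (μ k).re ∨ (β k = 0 ∧ μ k = 0)

lemma Ffun_continuous {n : ℕ} (β γ : Fin n → ℕ) (μ : Fin n → ℂ) (hμ : Good β μ) :
    Continuous (Ffun β γ μ) := by
  unfold Ffun
  refine continuous_finsetProd _ fun k _ => ?_
  refine (hfun_continuous _ _ _ ?_).comp (continuous_apply k)
  rcases hμ k with h | h
  · left; linarith
  · right; exact h

lemma dbar_contDiff {n : ℕ} (k : Fin n) (φ : (Fin n → ℂ) → ℂ)
    (hφ : ContDiff ℝ (⊤ : ℕ∞) φ) : ContDiff ℝ (⊤ : ℕ∞) (dbar k φ) := by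
  have h : ContDiff ℝ (⊤ : ℕ∞) (fderiv ℝ φ) := hφ.fderiv_right (by simp)
  unfold dbar
  exact (h.clm_apply contDiff_const).add (contDiff_const.mul (h.clm_apply contDiff_const))

lemma dbar_supp {n : ℕ} (k : Fin n) (φ : (Fin n → ℂ) → ℂ)
    (hφ : HasCompactSupport φ) : HasCompactSupport (dbar k φ) := by
  refine (hφ.fderiv (𝕜 := ℝ)).mono fun z hz => ?_
  simp only [Function.mem_support, dbar] at hz ⊢
  intro h; apply hz; simp [h]

lemma ibp_line {n : ℕ} (β γ : Fin n → ℕ) (μ : Fin n → ℂ) (hμ : Good β μ) (k : Fin n)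
    (hk : (β k : ℝ) + 3 < (μ k).re) (φ : (Fin n → ℂ) → ℂ)
    (hφ : ContDiff ℝ (⊤ : ℕ∞) φ) (hs : HasCompactSupport φ) (v : ℂ) :
    ∃ R : ℂ, R = ∫ z, (∏ i ∈ Finset.univ.erase k, hfun (β i) (γ i) (μ i) (z i)) *
        hfun (β k + 1) (γ k + 1) (μ k) (z k) * φ z ∧
    ∫ z, Ffun β (Function.update γ k (γ k + 1)) μ z * fderiv ℝ φ z (Pi.single k v) =
      - (v * (μ k - β k) * R + starRingEnd ℂ v * (μ k + γ k + 1) * ∫ z, Ffun β γ μ z * φ z) := by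
  refine ⟨_, rfl, ?_⟩
  set A : (Fin n → ℂ) → ℂ := fun z => ∏ i ∈ Finset.univ.erase k, hfun (β i) (γ i) (μ i) (z i)
    with hA
  have hAc : Continuous A := by
    refine continuous_finsetProd _ fun i _ => ?_
    refine (hfun_continuous _ _ _ ?_).comp (continuous_apply i)
    rcases hμ i with h | h
    · left; linarith
    · right; exact h
  have hF1 : ∀ z, Ffun β γ μ z = A z * hfun (β k) (γ k) (μ k) (z k) := by
    intro z
    rw [Ffun, ← Finset.prod_erase_mul _ _ (Finset.mem_univ k)]
  have hF2 : ∀ z, Ffun β (Function.update γ k (γ k + 1)) μ z =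
      A z * hfun (β k) (γ k + 1) (μ k) (z k) := by
    intro z
    rw [Ffun, ← Finset.prod_erase_mul _ _ (Finset.mem_univ k)]
    congr 1
    · refine Finset.prod_congr rfl fun i hi => ?_
      rw [Function.update_of_ne (Finset.ne_of_mem_erase hi)]
    · simp
  have hc1 : Continuous fun z : Fin n → ℂ => hfun (β k + 1) (γ k + 1) (μ k) (z k) :=
    (hfun_continuous _ _ _ (Or.inl (by push_cast; linarith))).comp (continuous_apply k)
  have hc0 : Continuous fun z : Fin n → ℂ => hfun (β k) (γ k) (μ k) (z k) :=
    (hfun_continuous _ _ _ (Or.inl (by linarith))).comp (continuous_apply k)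
  have hφc := hφ.continuous
  have hφ' : Continuous fun z => fderiv ℝ φ z (Pi.single k v) :=
    (hφ.continuous_fderiv (by simp)).clm_apply continuous_const
  have hs' : HasCompactSupport fun z => fderiv ℝ φ z (Pi.single k v) := by
    refine (hs.fderiv (𝕜 := ℝ)).mono fun z hz => ?_
    simp only [Function.mem_support] at hz ⊢
    intro h; apply hz; simp [h]
  have key := integral_bilinear_hasLineDerivAt_right_eq_neg_left_of_integrable
    (μ := (volume : Measure (Fin n → ℂ))) (B := ContinuousLinearMap.mul ℝ ℂ)
    (f := Ffun β (Function.update γ k (γ k + 1)) μ)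
    (f' := fun z => A z * (v * ((μ k - β k) * hfun (β k + 1) (γ k + 1) (μ k) (z k)) +
        (starRingEnd ℂ v) * ((μ k + γ k + 1) * hfun (β k) (γ k) (μ k) (z k))))
    (g := φ) (g' := fun z => fderiv ℝ φ z (Pi.single k v)) (v := Pi.single k v)
    ?_ ?_ ?_ ?_ ?_
  · simp only [ContinuousLinearMap.mul_apply'] at key
    rw [key]
    congr 1
    have i1 : Integrable fun z => A z * hfun (β k + 1) (γ k + 1) (μ k) (z k) * φ z :=
      ((hAc.mul hc1).mul hφc).integrable_of_hasCompactSupport hs.mul_left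
    have i2 : Integrable fun z => Ffun β γ μ z * φ z :=
      ((Ffun_continuous β γ μ hμ).mul hφc).integrable_of_hasCompactSupport hs.mul_left
    rw [← integral_const_mul, ← integral_const_mul,
      ← integral_add (i1.const_mul _) (i2.const_mul _)]
    congr 1
    funext z
    rw [hF1]; ring
  · refine Continuous.integrable_of_hasCompactSupport ?_ ?_
    · simp only [ContinuousLinearMap.mul_apply']
      fun_prop
    · exact hs.mul_left
  · exact Continuous.integrable_of_hasCompactSupport
      ((Ffun_continuous β _ μ hμ).mul hφ') hs'.mul_left
  · exact Continuous.integrable_of_hasCompactSupport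
      ((Ffun_continuous β _ μ hμ).mul hφc) hs.mul_left
  · intro z _
    unfold HasLineDerivAt
    have h := (hfun_line (β k) (γ k) (μ k) (z k) v hk).const_mul (A z)
    refine h.congr_of_eventuallyEq (Filter.Eventually.of_forall fun t => ?_)
    simp only
    rw [hF2]
    congr 1
    · refine Finset.prod_congr rfl fun i hi => ?_
      simp [Pi.single_eq_of_ne (Finset.ne_of_mem_erase hi)]
    · simp
  · intro z _
    exact ((hφ.differentiable (by simp)) z).hasFDerivAt.hasLineDerivAt _

lemma ibp {n : ℕ} (β γ : Fin n → ℕ) (μ : Fin n → ℂ) (hμ : Good β μ) (k : Fin n)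
    (hk : (β k : ℝ) + 3 < (μ k).re) (φ : (Fin n → ℂ) → ℂ)
    (hφ : ContDiff ℝ (⊤ : ℕ∞) φ) (hs : HasCompactSupport φ) :
    ∫ z, Ffun β (Function.update γ k (γ k + 1)) μ z * dbar k φ z =
      - (2 * (μ k + γ k + 1) * ∫ z, Ffun β γ μ z * φ z) := by
  obtain ⟨R, hR, h1⟩ := ibp_line β γ μ hμ k hk φ hφ hs 1
  obtain ⟨R', hR', h2⟩ := ibp_line β γ μ hμ k hk φ hφ hs Complex.I
  have hRR : R' = R := hR'.trans hR.symm
  subst hRR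
  have hint : ∀ v : ℂ, Integrable fun z => Ffun β (Function.update γ k (γ k + 1)) μ z *
      fderiv ℝ φ z (Pi.single k v) := by
    intro v
    refine Continuous.integrable_of_hasCompactSupport ((Ffun_continuous β _ μ hμ).mul
      ((hφ.continuous_fderiv (by simp)).clm_apply continuous_const)) (HasCompactSupport.mul_left ?_)
    refine (hs.fderiv (𝕜 := ℝ)).mono fun z hz => ?_
    simp only [Function.mem_support] at hz ⊢
    intro h; apply hz; simp [h]
  have : ∫ z, Ffun β (Function.update γ k (γ k + 1)) μ z * dbar k φ z =
      (∫ z, Ffun β (Function.update γ k (γ k + 1)) μ z * fderiv ℝ φ z (Pi.single k 1)) +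
      Complex.I * ∫ z, Ffun β (Function.update γ k (γ k + 1)) μ z *
        fderiv ℝ φ z (Pi.single k Complex.I) := by
    rw [← integral_const_mul, ← integral_add (hint 1) ((hint Complex.I).const_mul _)]
    congr 1
    funext z
    rw [dbar]; ring
  rw [this, h1, h2]
  simp only [map_one, Complex.conj_I]
  linear_combination ((μ k + γ k + 1) * (∫ z, Ffun β γ μ z * φ z) - (μ k - β k) * R') *
    Complex.I_mul_I

lemma reduce {n : ℕ} (β : Fin n → ℕ) (φ : (Fin n → ℂ) → ℂ)
    (hφ : ContDiff ℝ (⊤ : ℕ∞) φ) (hs : HasCompactSupport φ) (m : ℕ) :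
    ∀ γ : Fin n → ℕ, (∀ k, γ k ≤ β k) → ∑ k, γ k = m →
    ∃ ψ : (Fin n → ℂ) → ℂ, ContDiff ℝ (⊤ : ℕ∞) ψ ∧ HasCompactSupport ψ ∧
    ∃ c : (Fin n → ℂ) → ℂ, AnalyticOnNhd ℂ c {μ | ∀ k, -1 < (μ k).re} ∧
      ∀ μ, Good β μ → ∫ z, Ffun β 0 μ z * φ z = c μ * ∫ z, Ffun β γ μ z * ψ z := by
  induction m with
  | zero =>
    intro γ _ h0
    have : γ = 0 := by
      funext k
      simpa using (Finset.sum_eq_zero_iff.mp h0) k (Finset.mem_univ k)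
    subst this
    exact ⟨φ, hφ, hs, fun _ => 1, analyticOnNhd_const, fun μ _ => by simp⟩
  | succ m ih =>
    intro γ hγ hsum
    obtain ⟨k, hk⟩ : ∃ k, γ k ≠ 0 := by
      by_contra! h
      simp [h] at hsum
    obtain ⟨j, hj⟩ := Nat.exists_eq_succ_of_ne_zero hk
    have hle : ∀ i, Function.update γ k j i ≤ γ i := by
      intro i
      by_cases hi : i = k
      · subst hi; simp [hj]
      · simp [hi]
    have hup : Function.update (Function.update γ k j) k (Function.update γ k j k + 1) = γ := by
      simp [← Nat.succ_eq_add_one, ← hj]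
    have hsm : ∑ i, Function.update γ k j i = m := by
      rw [Finset.sum_update_of_mem (Finset.mem_univ k)]
      rw [← Finset.add_sum_erase _ _ (Finset.mem_univ k)] at hsum
      rw [Finset.sdiff_singleton_eq_erase]
      omega
    obtain ⟨ψ, hψ, hψs, c, hc, hcI⟩ := ih _ (fun i => (hle i).trans (hγ i)) hsm
    refine ⟨dbar k ψ, dbar_contDiff k ψ hψ, dbar_supp k ψ hψs,
      fun μ => - c μ * (2 * (μ k + j + 1))⁻¹, ?_, ?_⟩
    · intro μ hμ
      have ha : AnalyticAt ℂ (fun μ : Fin n → ℂ => μ k) μ :=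
        (ContinuousLinearMap.proj (R := ℂ) (φ := fun _ : Fin n => ℂ) k).analyticAt μ
      refine (hc μ hμ).neg.mul (AnalyticAt.inv (analyticAt_const.mul
        ((ha.add analyticAt_const).add analyticAt_const)) ?_)
      intro h0
      have := congrArg Complex.re h0
      simp at this
      have h1 := hμ k
      linarith [(Nat.cast_nonneg j : (0:ℝ) ≤ j)]
    · intro μ hμ
      have hkβ : (β k : ℝ) + 3 < (μ k).re := by
        rcases hμ k with h | h
        · exact h
        · have := hγ k; omega
      have h := ibp β (Function.update γ k j) μ hμ k hkβ ψ hψ hψs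
      rw [hup] at h
      simp only [Function.update_self] at h
      rw [hcI μ hμ, h]
      have hne : μ k + j + 1 ≠ 0 := by
        intro h0
        have := congrArg Complex.re h0
        simp at this
        linarith [(Nat.cast_nonneg j : (0:ℝ) ≤ j), (Nat.cast_nonneg (β k) : (0:ℝ) ≤ β k)]
      field_simp

lemma exp_log_integrable (s R : ℝ) (hs : -1 < s) (hR : 0 < R) :
    IntegrableOn (fun z : ℂ => Real.exp (s * Real.log (‖z‖ ^ 2))) (Metric.ball 0 R) := by
  rw [integrableOn_fun_norm_addHaar (μ := (volume : Measure ℂ))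
    (f := fun y => Real.exp (s * Real.log (y ^ 2)))]
  have h1 : IntegrableOn (fun y : ℝ => y ^ (2 * s + 1)) (Set.Ioo 0 R) := by
    have := intervalIntegral.intervalIntegrable_rpow' (a := 0) (b := R) (r := 2 * s + 1)
      (by linarith)
    rw [intervalIntegrable_iff_integrableOn_Ioo_of_le hR.le] at this
    exact this
  refine h1.congr_fun (fun y hy => ?_) measurableSet_Ioo
  have hy0 : 0 < y := hy.1
  simp only [Complex.finrank_real_complex, smul_eq_mul]
  rw [Real.rpow_add hy0, Real.rpow_one, Real.rpow_def_of_pos hy0, Real.log_pow]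
  norm_num
  rw [mul_comm]
  congr 2
  ring

lemma ae_ne_zero (n : ℕ) : ∀ᵐ z : Fin n → ℂ, ∀ k, z k ≠ 0 := by
  rw [ae_all_iff]
  intro k
  have := Measure.pi_hyperplane (fun _ : Fin n => (volume : Measure ℂ)) k 0
  rw [ae_iff]
  simpa [volume_pi] using this

/-- the linear functional in the exponent -/
noncomputable def aCLM {n r : ℕ} (α : Fin r → Fin n → ℕ) (k : Fin n) : (Fin r → ℂ) →L[ℂ] ℂ :=
  ∑ l, (α l k : ℂ) • ContinuousLinearMap.proj (R := ℂ) (φ := fun _ : Fin r => ℂ) l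

lemma aCLM_apply {n r : ℕ} (α : Fin r → Fin n → ℕ) (k : Fin n) (lam : Fin r → ℂ) :
    aCLM α k lam = ∑ l, lam l * (α l k : ℂ) := by
  simp [aCLM, mul_comm, ContinuousLinearMap.sum_apply]

lemma final_analytic {n r : ℕ} (α : Fin r → Fin n → ℕ) (β : Fin n → ℕ)
    (ψ : (Fin n → ℂ) → ℂ) (hψ : Continuous ψ) (hs : HasCompactSupport ψ) (lam0 : Fin r → ℂ)
    (h0 : ∀ k, -(1/2 : ℝ) < (aCLM α k lam0).re) :
    AnalyticAt ℂ (fun lam => ∫ z, Ffun β β (fun k => aCLM α k lam) z * ψ z) lam0 := by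
  set w : (Fin n → ℂ) → ℂ := fun z =>
    (∏ k, (z k) ^ (-(β k : ℤ)) * (starRingEnd ℂ (z k)) ^ (β k)) * ψ z with hw
  set L : (Fin n → ℂ) → (Fin r → ℂ) →L[ℂ] ℂ := fun z =>
    ∑ k, ((Real.log (‖z k‖ ^ 2) : ℝ) : ℂ) • aCLM α k with hL
  have hfun_eq : (fun lam => ∫ z, Ffun β β (fun k => aCLM α k lam) z * ψ z) =
      fun lam => ∫ z, Complex.exp (L z lam) * w z := by
    funext lam
    refine integral_congr_ae ?_
    filter_upwards [ae_ne_zero n] with z hz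
    simp only [hw, hL, Ffun, hfun, ContinuousLinearMap.sum_apply, Complex.exp_sum]
    rw [← mul_assoc, ← Finset.prod_mul_distrib]
    congr 1
    refine Finset.prod_congr rfl fun k _ => ?_
    have hp : 0 < ‖z k‖ := norm_pos_iff.mpr (hz k)
    have hne : ((‖z k‖ ^ 2 : ℝ) : ℂ) ≠ 0 := by
      rw [Complex.ofReal_ne_zero]; positivity
    rw [Complex.cpow_def_of_ne_zero hne, ← Complex.ofReal_log (by positivity)]
    simp [mul_assoc]
  rw [hfun_eq]
  have hLm : Measurable fun z : Fin n → ℂ => z := measurable_id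
  have hlog : ∀ k : Fin n, Measurable fun z : Fin n → ℂ => Real.log (‖z k‖ ^ 2) := fun k => by
    fun_prop
  have hLmeas : AEStronglyMeasurable L (volume : Measure (Fin n → ℂ)) := by
    refine Finset.aestronglyMeasurable_fun_sum _ fun k _ => ?_
    have h1 : AEStronglyMeasurable (fun z : Fin n → ℂ => ((Real.log (‖z k‖ ^ 2) : ℝ) : ℂ)) volume :=
      (Complex.measurable_ofReal.comp (hlog k)).aestronglyMeasurable
    exact h1.smul_const (aCLM α k)
  have hwmeas : AEStronglyMeasurable w (volume : Measure (Fin n → ℂ)) := by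
    have h1 : Measurable fun z : Fin n → ℂ =>
        ∏ k, (z k) ^ (-(β k : ℤ)) * (starRingEnd ℂ (z k)) ^ (β k) := by
      refine Finset.measurable_fun_prod _ fun k _ => ?_
      refine Measurable.mul ?_ ?_
      · simp only [zpow_neg, zpow_natCast]
        exact ((measurable_pi_apply k).pow_const _).inv
      · exact ((Complex.continuous_conj.measurable).comp (measurable_pi_apply k)).pow_const _
    exact h1.aestronglyMeasurable.mul hψ.aestronglyMeasurable
  obtain ⟨M, hM⟩ := hs.exists_bound_of_continuous hψ
  obtain ⟨R, hR0, hR⟩ := hs.isCompact.isBounded.subset_ball_lt 0 (0 : Fin n → ℂ)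
  set S : ℝ := ∑ k, ‖aCLM α k‖ + 1 with hS
  have hSpos : 0 < S := by positivity
  have hSk : ∀ k, ‖aCLM α k‖ ≤ S := fun k => by
    have := Finset.single_le_sum (f := fun k => ‖aCLM α k‖) (fun i _ => norm_nonneg _)
      (Finset.mem_univ k)
    linarith
  have hM0 : 0 ≤ M := (norm_nonneg _).trans (hM 0)
  refine expint_analytic volume L hLmeas w hwmeas lam0 (1 / (4 * S)) (by positivity) ?_
  let G : Fin n → ℂ → ℝ := fun k => (Metric.ball (0:ℂ) R).indicator fun ζ =>
    Real.exp (((aCLM α k lam0).re + 1/4) * Real.log (‖ζ‖ ^ 2)) +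
    Real.exp (((aCLM α k lam0).re - 1/4) * Real.log (‖ζ‖ ^ 2))
  have hG : ∀ k, Integrable (G k) := by
    intro k
    rw [integrable_indicator_iff Metric.isOpen_ball.measurableSet]
    have := h0 k
    exact (exp_log_integrable _ R (by linarith) hR0).add (exp_log_integrable _ R (by linarith) hR0)
  have hGnn : ∀ k ζ, 0 ≤ G k ζ := fun k ζ =>
    Set.indicator_nonneg (fun _ _ => by positivity) _
  have hGp : Integrable fun z : Fin n → ℂ => ∏ k, G k (z k) := Integrable.fintype_prod hG
  refine Integrable.mono' (hGp.const_mul M) ?_ (ae_of_all _ fun z => ?_)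
  · have h2 : AEStronglyMeasurable (fun z => L z lam0) (volume : Measure (Fin n → ℂ)) :=
      (show Continuous (fun l : (Fin r → ℂ) →L[ℂ] ℂ => l lam0) by fun_prop).comp_aestronglyMeasurable
        hLmeas
    refine hwmeas.norm.mul (Real.continuous_exp.comp_aestronglyMeasurable ?_)
    exact (Complex.continuous_re.comp_aestronglyMeasurable h2).add (hLmeas.norm.const_mul _)
  · rw [Real.norm_of_nonneg (by positivity)]
    by_cases hz : z ∈ tsupport ψ
    · have hzR : ∀ k, z k ∈ Metric.ball (0:ℂ) R := by
        have := hR hz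
        rw [mem_ball_zero_iff, pi_norm_lt_iff hR0] at this
        intro k
        simpa using this k
      have hwz : ‖w z‖ ≤ M := by
        simp only [hw, norm_mul, norm_prod]
        refine (mul_le_of_le_one_left (norm_nonneg _) ?_).trans (hM z)
        refine Finset.prod_le_one (fun _ _ => by positivity) fun k _ => ?_
        rw [norm_zpow, norm_pow, RCLike.norm_conj, zpow_neg, zpow_natCast]
        exact inv_mul_le_one
      have hLn : 1 / (4 * S) * ‖L z‖ ≤ ∑ k, 1/4 * |Real.log (‖z k‖ ^ 2)| := by
        have h1 : ‖L z‖ ≤ ∑ k, |Real.log (‖z k‖ ^ 2)| * S := by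
          refine (norm_sum_le _ _).trans (Finset.sum_le_sum fun k _ => ?_)
          rw [norm_smul, Complex.norm_real, Real.norm_eq_abs]
          gcongr
          exact hSk k
        calc 1 / (4 * S) * ‖L z‖ ≤ 1 / (4 * S) * ∑ k, |Real.log (‖z k‖ ^ 2)| * S := by gcongr
          _ = _ := by
            rw [Finset.mul_sum]
            refine Finset.sum_congr rfl fun k _ => ?_
            field_simp
      have hLre : (L z lam0).re = ∑ k, (aCLM α k lam0).re * Real.log (‖z k‖ ^ 2) := by
        simp only [hL, ContinuousLinearMap.sum_apply, Complex.re_sum, ContinuousLinearMap.smul_apply,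
          smul_eq_mul, Complex.re_ofReal_mul]
        exact Finset.sum_congr rfl fun k _ => mul_comm _ _
      have hexp : Real.exp ((L z lam0).re + 1 / (4 * S) * ‖L z‖) ≤ ∏ k, G k (z k) := by
        calc _ ≤ Real.exp (∑ k, ((aCLM α k lam0).re * Real.log (‖z k‖ ^ 2) +
              1/4 * |Real.log (‖z k‖ ^ 2)|)) := by
              rw [Finset.sum_add_distrib, hLre]
              gcongr
          _ = ∏ k, Real.exp ((aCLM α k lam0).re * Real.log (‖z k‖ ^ 2) +
              1/4 * |Real.log (‖z k‖ ^ 2)|) := Real.exp_sum _ _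
          _ ≤ _ := by
              refine Finset.prod_le_prod (fun _ _ => by positivity) fun k _ => ?_
              simp only [G]
              rw [Set.indicator_of_mem (hzR k)]
              rcases abs_cases (Real.log (‖z k‖ ^ 2)) with h | h
              · rw [h.1]
                refine le_add_of_le_of_nonneg (le_of_eq ?_) (by positivity)
                congr 1; ring
              · rw [h.1]
                refine le_add_of_nonneg_of_le (by positivity) (le_of_eq ?_)
                congr 1; ring
      gcongr
    · have : ψ z = 0 := image_eq_zero_of_notMem_tsupport hz
      have hwz : w z = 0 := by simp [hw, this]
      rw [hwz]
      simp only [norm_zero, zero_mul]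
      exact mul_nonneg hM0 (Finset.prod_nonneg fun k _ => hGnn k _)

lemma prod_cpow_eq {n r : ℕ} (α : Fin r → Fin n → ℕ) (k : Fin n) (lam : Fin r → ℂ)
    (hl : ∀ l, 0 < (lam l).re) (z : ℂ) :
    ∏ l, ((‖z‖ ^ 2 : ℝ) : ℂ) ^ (lam l * (α l k : ℂ)) =
      ((‖z‖ ^ 2 : ℝ) : ℂ) ^ (aCLM α k lam) := by
  rw [aCLM_apply]
  by_cases h0 : z = 0
  · subst h0
    have hz : ((‖(0:ℂ)‖ ^ 2 : ℝ) : ℂ) = 0 := by simp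
    rw [hz]
    by_cases hα : ∀ l, α l k = 0
    · simp [hα]
    · push Not at hα
      obtain ⟨l, hl0⟩ := hα
      have hne : ∀ l, α l k ≠ 0 → lam l * (α l k : ℂ) ≠ 0 := fun l h => by
        refine mul_ne_zero ?_ (by exact_mod_cast h)
        intro h'; have := hl l; simp [h'] at this
      rw [Finset.prod_eq_zero (Finset.mem_univ l) (Complex.zero_cpow (hne l hl0)),
        Complex.zero_cpow]
      intro hsum
      have := congrArg Complex.re hsum
      simp only [Complex.re_sum, Complex.zero_re] at this
      have hpos : 0 < ∑ l, (lam l * (α l k : ℂ)).re := by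
        refine Finset.sum_pos' (fun i _ => ?_) ⟨l, Finset.mem_univ l, ?_⟩
        · simp; exact mul_nonneg (hl i).le (Nat.cast_nonneg _)
        · simp; exact mul_pos (hl l) (by exact_mod_cast Nat.pos_of_ne_zero hl0)
      linarith
  · have hp : 0 < ‖z‖ := norm_pos_iff.mpr h0
    have hne : ((‖z‖ ^ 2 : ℝ) : ℂ) ≠ 0 := by
      rw [Complex.ofReal_ne_zero]; positivity
    simp only [Complex.cpow_def_of_ne_zero hne, ← Complex.exp_sum, Finset.mul_sum]

open MeasureTheory in
/-- joint analytic continuation of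
`λ ↦ ∫_{ℂ^n} ∏_ℓ |x^{α_ℓ}|^{2λ_ℓ} · x^{-β} · φ dV` to a neighborhood
`{Re λ_ℓ > -δ ∀ℓ}` of the origin of `ℂ^r`. -/
theorem stmt12 (n r : ℕ) (hn : 1 ≤ n) (hr : 1 ≤ r)
    (φ : (Fin n → ℂ) → ℂ) (hφ : ContDiff ℝ (⊤ : ℕ∞) φ) (hsupp : HasCompactSupport φ)
    (α : Fin r → Fin n → ℕ) (β : Fin n → ℕ)
    (hβ : ∀ k : Fin n, 0 < β k → ∃ l : Fin r, 0 < α l k) :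
    ∃ δ > (0 : ℝ), ∃ C > (0 : ℝ), ∃ g : (Fin r → ℂ) → ℂ,
      AnalyticOnNhd ℂ g {lam : Fin r → ℂ | ∀ l, -δ < (lam l).re} ∧
      ∀ lam : Fin r → ℂ, (∀ l, C < (lam l).re) →
        Integrable (fun z : Fin n → ℂ =>
          (∏ l : Fin r, ∏ k : Fin n,
            ((‖z k‖ ^ 2 : ℝ) : ℂ) ^ (lam l * (α l k : ℂ))) *
          (∏ k : Fin n, (z k) ^ (-(β k : ℤ))) * φ z) ∧
        g lam = ∫ z : Fin n → ℂ,
          (∏ l : Fin r, ∏ k : Fin n,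
            ((‖z k‖ ^ 2 : ℝ) : ℂ) ^ (lam l * (α l k : ℂ))) *
          (∏ k : Fin n, (z k) ^ (-(β k : ℤ))) * φ z := by
  have hre : ∀ k (lam : Fin r → ℂ), (aCLM α k lam).re = ∑ l, (lam l).re * (α l k : ℝ) := by
    intro k lam
    simp [aCLM_apply]
  obtain ⟨ψ, hψ, hψs, c, hc, hcI⟩ := reduce β φ hφ hsupp _ β (fun _ => le_rfl) rfl
  set S : ℝ := ∑ l, ∑ k, (α l k : ℝ) with hS
  have hS0 : 0 ≤ S := by positivity
  have hSk : ∀ k, ∑ l, (α l k : ℝ) ≤ S := fun k => Finset.sum_le_sum fun l _ =>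
    Finset.single_le_sum (f := fun k => (α l k : ℝ)) (fun _ _ => Nat.cast_nonneg _)
      (Finset.mem_univ k)
  set δ : ℝ := 1 / (2 * (1 + S)) with hδ
  have hδ0 : 0 < δ := by positivity
  have hδS : δ * S < 1 / 2 := by
    rw [hδ, div_mul_eq_mul_div, div_lt_div_iff₀ (by positivity) (by norm_num)]
    linarith
  have hlow : ∀ lam : Fin r → ℂ, (∀ l, -δ < (lam l).re) → ∀ k,
      -(1/2 : ℝ) < (aCLM α k lam).re := by
    intro lam hlam k
    rw [hre]
    calc -(1/2 : ℝ) < -(δ * S) := by linarith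
      _ ≤ -(δ * ∑ l, (α l k : ℝ)) := by gcongr; exact hSk k
      _ = ∑ l, (-δ) * (α l k : ℝ) := by rw [← Finset.mul_sum]; ring
      _ ≤ _ := Finset.sum_le_sum fun l _ => by
        have := (hlam l).le
        gcongr
  refine ⟨δ, hδ0, ∑ k, (β k : ℝ) + 3, by positivity,
    fun lam => c (fun k => aCLM α k lam) * ∫ z, Ffun β β (fun k => aCLM α k lam) z * ψ z, ?_, ?_⟩
  · intro lam hlam
    have hl := hlow lam hlam
    refine AnalyticAt.mul ?_ (final_analytic α β ψ hψ.continuous hψs lam hl)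
    have hlin : AnalyticAt ℂ (fun lam : Fin r → ℂ => fun k => aCLM α k lam) lam :=
      (ContinuousLinearMap.pi (fun k => aCLM α k)).analyticAt lam
    exact AnalyticAt.fun_comp (g := c) (hc _ (fun k => by linarith [hl k])) hlin
  · intro lam hlam
    have hB0 : 0 ≤ ∑ k, (β k : ℝ) := by positivity
    have hpos : ∀ l, 0 < (lam l).re := fun l => by linarith [hlam l]
    have hgood : Good β (fun k => aCLM α k lam) := by
      intro k
      by_cases hα : ∀ l, α l k = 0
      · right
        refine ⟨?_, ?_⟩
        · by_contra h
          obtain ⟨l, hl⟩ := hβ k (Nat.pos_of_ne_zero h)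
          exact hl.ne' (hα l)
        · simp [aCLM_apply, hα]
      · left
        push Not at hα
        obtain ⟨l, hl⟩ := hα
        show (β k : ℝ) + 3 < (aCLM α k lam).re
        rw [hre]
        have h1 : (lam l).re * (α l k : ℝ) ≤ ∑ l, (lam l).re * (α l k : ℝ) :=
          Finset.single_le_sum (f := fun l => (lam l).re * (α l k : ℝ))
            (fun i _ => mul_nonneg (hpos i).le (Nat.cast_nonneg _)) (Finset.mem_univ l)
        have h2 : (1 : ℝ) ≤ α l k := by exact_mod_cast Nat.one_le_iff_ne_zero.mpr hl
        have h3 : (β k : ℝ) ≤ ∑ k, (β k : ℝ) :=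
          Finset.single_le_sum (f := fun k => (β k : ℝ)) (fun _ _ => Nat.cast_nonneg _)
            (Finset.mem_univ k)
        nlinarith [hlam l, hpos l]
    have heq : (fun z : Fin n → ℂ =>
          (∏ l : Fin r, ∏ k : Fin n,
            ((‖z k‖ ^ 2 : ℝ) : ℂ) ^ (lam l * (α l k : ℂ))) *
          (∏ k : Fin n, (z k) ^ (-(β k : ℤ))) * φ z) =
        fun z => Ffun β 0 (fun k => aCLM α k lam) z * φ z := by
      funext z
      rw [Finset.prod_comm, ← Finset.prod_mul_distrib, Ffun]
      congr 1
      refine Finset.prod_congr rfl fun k _ => ?_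
      rw [prod_cpow_eq α k lam hpos]
      simp [hfun]
    rw [heq]
    refine ⟨?_, (hcI _ hgood).symm⟩
    exact ((Ffun_continuous β 0 _ hgood).mul hφ.continuous).integrable_of_hasCompactSupport
      hsupp.mul_left
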